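/- Let Λ be a symmetric positive definite N×N matrix, let x_1, …, x_T ∈ ℝ^N with ‖x_t‖_2 ≤ 1 for all t, define V_0 = Λ and V_t = V_{t−1} + x_t x_t^T, let λ > 0 be the smallest eigenvalue of Λ, and let c > 0. If real numbers ρ_1, …, ρ_T satisfy 0 ≤ ρ_t ≤ min(2, 2c ‖x_t‖_{V_{t−1}^{−1}}) for all t, then Σ_{t=1}^T ρ_t ≤ (2c + 2) √(2 T log(det(V_T)/det(Λ))). In particular, if d is the effective dimension of Λ with horizon T, then Σ_{t=1}^T ρ_t ≤ (2c + 2) · 2 √(d T log(1 + T/λ)). -/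

import Mathlib

open Matrix Finset

/-- The regularized design matrix after `t` rounds:
`V_t = Λ + ∑_{τ < t} x_τ x_τᵀ` (so `V_0 = Λ` and `V_t = V_{t-1} + x_t x_tᵀ`,
with the rounds `0`-indexed by `Fin T`). -/
def designMatrix (N T : ℕ) (Λ : Matrix (Fin N) (Fin N) ℝ)
    (x : Fin T → Fin N → ℝ) (t : ℕ) : Matrix (Fin N) (Fin N) ℝ :=
  Λ + ∑ τ ∈ Finset.univ.filter (fun τ : Fin T => (τ : ℕ) < t),
        Matrix.vecMulVec (x τ) (x τ)

/-- The defining set of the effective dimension: the set of `d ∈ {1, …, N}`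
with `(d - 1) λ_d ≤ T / log (1 + T / λ)`, where `ev d` is the `d`-th
(1-indexed) eigenvalue of `Λ` and `λ = λ₁ = ev 1` the smallest one. -/
def effDimSet (N : ℕ) (ev : ℕ → ℝ) (T : ℝ) : Set ℕ :=
  {d : ℕ | 1 ≤ d ∧ d ≤ N ∧ ((d : ℝ) - 1) * ev d ≤ T / Real.log (1 + T / ev 1)}



lemma aux_dm_posDef (N T : ℕ) (Λ : Matrix (Fin N) (Fin N) ℝ) (hΛ : Λ.PosDef)
    (x : Fin T → Fin N → ℝ) (t : ℕ) : (designMatrix N T Λ x t).PosDef := by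
  unfold designMatrix
  refine hΛ.add_posSemidef ?_
  refine Matrix.posSemidef_sum _ fun i _ => ?_
  simpa using Matrix.posSemidef_vecMulVec_self_star (x i)

lemma aux_det_rankOne (N : ℕ) (A : Matrix (Fin N) (Fin N) ℝ) (hA : A.PosDef) (u : Fin N → ℝ) :
    (A + Matrix.vecMulVec u u).det = A.det * (1 + u ⬝ᵥ A⁻¹ *ᵥ u) := by
  have h := Matrix.det_add_replicateCol_mul_replicateRow (ι := Unit) (A := A)
    (isUnit_iff_ne_zero.mpr hA.det_pos.ne') u u
  rw [← Matrix.vecMulVec_eq] at h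
  rw [h, Matrix.det_unique (n := Unit)]
  congr 1
  rw [Matrix.mul_assoc]
  simp [Matrix.mul_apply, Matrix.mulVec, dotProduct]

lemma aux_dm_succ (N T : ℕ) (Λ : Matrix (Fin N) (Fin N) ℝ)
    (x : Fin T → Fin N → ℝ) (t : Fin T) :
    designMatrix N T Λ x (t + 1) = designMatrix N T Λ x t + Matrix.vecMulVec (x t) (x t) := by
  unfold designMatrix
  have : (Finset.univ.filter (fun τ : Fin T => (τ : ℕ) < t + 1))
      = insert t (Finset.univ.filter (fun τ : Fin T => (τ : ℕ) < t)) := by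
    ext s
    simp only [Finset.mem_filter, Finset.mem_univ, true_and, Finset.mem_insert, Fin.ext_iff]
    omega
  rw [this, Finset.sum_insert (by simp), add_assoc]
  congr 1
  rw [add_comm]

lemma aux_min_log (u : ℝ) (hu : 0 ≤ u) : min 1 u ≤ 2 * Real.log (1 + u) := by
  have h := Real.one_sub_inv_le_log_of_pos (show 0 < 1 + u by linarith)
  have h2 : min 1 u ≤ 2 * (1 - (1 + u)⁻¹) := by
    have : 1 - (1 + u)⁻¹ = u / (1 + u) := by field_simp; ring
    rw [this, ← mul_div_assoc, le_div_iff₀ (by linarith)]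
    rcases le_total 1 u with h1 | h1
    · rw [min_eq_left h1]; linarith
    · rw [min_eq_right h1]; nlinarith
  linarith

lemma aux_log_sum (N T : ℕ) (Λ : Matrix (Fin N) (Fin N) ℝ) (hΛ : Λ.PosDef)
    (x : Fin T → Fin N → ℝ) :
    ∑ t : Fin T, Real.log (1 + x t ⬝ᵥ (designMatrix N T Λ x (t : ℕ))⁻¹ *ᵥ x t)
      = Real.log ((designMatrix N T Λ x T).det / Λ.det) := by
  have h0 : designMatrix N T Λ x 0 = Λ := by simp [designMatrix]
  have hp := fun t => (aux_dm_posDef N T Λ hΛ x t).det_pos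
  have h1 : ∀ t : Fin T, Real.log (1 + x t ⬝ᵥ (designMatrix N T Λ x (t : ℕ))⁻¹ *ᵥ x t)
      = Real.log (designMatrix N T Λ x (t + 1)).det - Real.log (designMatrix N T Λ x t).det := by
    intro t
    have e := aux_det_rankOne N _ (aux_dm_posDef N T Λ hΛ x t) (x t)
    rw [← aux_dm_succ] at e
    rw [← Real.log_div (hp _).ne' (hp _).ne', e, mul_div_cancel_left₀ _ (hp _).ne']
  rw [Finset.sum_congr rfl fun t _ => h1 t,
    Fin.sum_univ_eq_sum_range (fun t => Real.log (designMatrix N T Λ x (t + 1)).det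
      - Real.log (designMatrix N T Λ x t).det) T,
    Finset.sum_range_sub (fun t => Real.log (designMatrix N T Λ x t).det), h0,
    Real.log_div (hp _).ne' hΛ.det_pos.ne']

lemma aux_det_le_exp (N : ℕ) (A : Matrix (Fin N) (Fin N) ℝ) (hA : A.PosDef) :
    A.det ≤ Real.exp (A.trace - N) := by
  have h1 := hA.isHermitian.det_eq_prod_eigenvalues
  have h2 := hA.isHermitian.trace_eq_sum_eigenvalues
  simp only [RCLike.ofReal_real_eq_id, id] at h1 h2
  rw [h1, h2]
  have : (∑ i, hA.isHermitian.eigenvalues i) - N = ∑ i, (hA.isHermitian.eigenvalues i - 1) := by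
    simp
  rw [this, Real.exp_sum]
  refine Finset.prod_le_prod (fun i _ => (hA.eigenvalues_pos i).le) fun i _ => ?_
  have := Real.add_one_le_exp (hA.isHermitian.eigenvalues i - 1)
  linarith

lemma aux_hadamard (N : ℕ) (A : Matrix (Fin N) (Fin N) ℝ) (hA : A.PosDef) :
    A.det ≤ ∏ i, A i i := by
  have hd : ∀ i, 0 < A i i := fun i => hA.diag_pos
  set s : Fin N → ℝ := fun i => (Real.sqrt (A i i))⁻¹ with hs
  have hs0 : ∀ i, 0 < s i := fun i => inv_pos.mpr (Real.sqrt_pos.mpr (hd i))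
  have hss : ∀ i, s i * s i * A i i = 1 := by
    intro i
    have := Real.mul_self_sqrt (hd i).le
    have h' : Real.sqrt (A i i) ≠ 0 := (Real.sqrt_pos.mpr (hd i)).ne'
    simp only [hs]
    field_simp
    nlinarith
  have hS : (Matrix.diagonal s).PosDef := Matrix.posDef_diagonal_iff.mpr hs0
  have hB : (Matrix.diagonal s * A * Matrix.diagonal s).PosDef := by
    have := hA.conjTranspose_mul_mul_same (B := Matrix.diagonal s)
      (Matrix.mulVec_injective_of_isUnit hS.isUnit)
    rwa [hS.isHermitian.eq] at this
  have h := aux_det_le_exp N _ hB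
  have htr : (Matrix.diagonal s * A * Matrix.diagonal s).trace = N := by
    simp only [Matrix.trace, Matrix.diag_apply, Matrix.mul_diagonal, Matrix.diagonal_mul]
    rw [Finset.sum_congr rfl (g := fun _ => (1 : ℝ)) fun i _ => by rw [← hss i]; ring]
    simp
  rw [htr, sub_self, Real.exp_zero, Matrix.det_mul, Matrix.det_mul, Matrix.det_diagonal] at h
  have hprod : (∏ i, s i) * (∏ i, s i) * ∏ i, A i i = 1 := by
    rw [← Finset.prod_mul_distrib, ← Finset.prod_mul_distrib]
    exact Finset.prod_eq_one fun i _ => hss i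
  have hP : 0 < ∏ i, s i := Finset.prod_pos fun i _ => hs0 i
  have hPP := mul_pos hP hP
  refine le_of_mul_le_mul_left ?_ hPP
  rw [hprod]
  linarith

lemma aux_logdet (N T : ℕ) (hT : 0 < T)
    (ev : ℕ → ℝ)
    (hev_pos : 0 < ev 1)
    (hev_mono : MonotoneOn ev (Set.Icc 1 N))
    (Λ : Matrix (Fin N) (Fin N) ℝ)
    (hΛ : Λ = Matrix.diagonal fun i : Fin N => ev ((i : ℕ) + 1)) (hΛp : Λ.PosDef)
    (x : Fin T → Fin N → ℝ)
    (hx : ∀ t, ∑ i, (x t i) ^ 2 ≤ 1)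
    (d : ℕ)
    (hd : IsGreatest (effDimSet N ev (T : ℝ)) d) :
    Real.log ((designMatrix N T Λ x T).det / Λ.det) ≤ 2 * d * Real.log (1 + (T : ℝ) / ev 1) := by
  set L := Real.log (1 + (T : ℝ) / ev 1) with hL
  have hT' : (0 : ℝ) < T := by exact_mod_cast hT
  have hLpos : 0 < L := Real.log_pos (by have := div_pos hT' hev_pos; linarith)
  have hev1 : ∀ i : Fin N, ev 1 ≤ ev ((i : ℕ) + 1) := fun i =>
    hev_mono ⟨le_rfl, by have := i.2; omega⟩ ⟨by omega, by have := i.2; omega⟩ (by omega)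
  have hevp : ∀ i : Fin N, 0 < ev ((i : ℕ) + 1) := fun i => hev_pos.trans_le (hev1 i)
  have hV := aux_dm_posDef N T Λ hΛp x T
  set a : Fin N → ℝ := fun i => ∑ t, (x t i) ^ 2 with ha
  have ha0 : ∀ i, 0 ≤ a i := fun i => Finset.sum_nonneg fun t _ => sq_nonneg _
  have hasum : ∑ i, a i ≤ T := by
    simp only [ha]
    rw [Finset.sum_comm]
    calc _ ≤ ∑ t : Fin T, (1 : ℝ) := Finset.sum_le_sum fun t _ => hx t
      _ = T := by simp
  have haT : ∀ i, a i ≤ T := fun i =>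
    (Finset.single_le_sum (fun j _ => ha0 j) (Finset.mem_univ i)).trans hasum
  have hdiag : ∀ i, designMatrix N T Λ x T i i = ev ((i : ℕ) + 1) + a i := by
    intro i
    simp [designMatrix, hΛ, Matrix.sum_apply, Matrix.vecMulVec_apply, ha, sq]
  have hdet : Λ.det = ∏ i : Fin N, ev ((i : ℕ) + 1) := by rw [hΛ, Matrix.det_diagonal]
  have hpos1 : ∀ i : Fin N, 0 < 1 + a i / ev ((i : ℕ) + 1) := fun i => by
    have := div_nonneg (ha0 i) (hevp i).le
    linarith
  have h1 : (designMatrix N T Λ x T).det / Λ.det ≤ ∏ i : Fin N, (1 + a i / ev ((i : ℕ) + 1)) := by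
    rw [div_le_iff₀ hΛp.det_pos, hdet, ← Finset.prod_mul_distrib]
    refine (aux_hadamard N _ hV).trans (le_of_eq (Finset.prod_congr rfl fun i _ => ?_))
    rw [hdiag]
    have := (hevp i).ne'
    field_simp
  have h2 := Real.log_le_log (div_pos hV.det_pos hΛp.det_pos) h1
  rw [Real.log_prod (fun i _ => (hpos1 i).ne')] at h2
  refine h2.trans ?_
  have hterm : ∀ i : Fin N, Real.log (1 + a i / ev ((i : ℕ) + 1))
      ≤ (if (i : ℕ) < d then L else 0) + a i * (d * L / T) := by
    intro i
    split_ifs with hi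
    · have : 0 ≤ a i * (d * L / T) := mul_nonneg (ha0 i) (by positivity)
      have h3 : Real.log (1 + a i / ev ((i : ℕ) + 1)) ≤ L := by
        refine Real.log_le_log (hpos1 i) ?_
        have := div_le_div₀ hT'.le (haT i) hev_pos (hev1 i)
        linarith
      linarith
    · have hiN := i.2
      have hmono : ev (d + 1) ≤ ev ((i : ℕ) + 1) :=
        hev_mono ⟨by omega, by omega⟩ ⟨by omega, by omega⟩ (by omega)
      have h1' : ev 1 ≤ ev (d + 1) :=
        hev_mono ⟨by omega, by omega⟩ ⟨by omega, by omega⟩ (by omega)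
      have hp : 0 < ev (d + 1) := hev_pos.trans_le h1'
      have hnot : T / L < d * ev (d + 1) := by
        by_contra hcon
        have : d + 1 ∈ effDimSet N ev (T : ℝ) := by
          refine ⟨by omega, by omega, ?_⟩
          push_cast
          rw [add_sub_cancel_right]
          exact not_lt.mp hcon
        have := hd.2 this
        omega
      rw [div_lt_iff₀ hLpos] at hnot
      have hlog := Real.log_le_sub_one_of_pos (hpos1 i)
      have h5 : a i / ev ((i : ℕ) + 1) ≤ a i / ev (d + 1) :=
        div_le_div_of_nonneg_left (ha0 i) hp hmono
      have h6 : a i / ev (d + 1) ≤ a i * (d * L / T) := by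
        rw [div_eq_mul_inv]
        refine mul_le_mul_of_nonneg_left ?_ (ha0 i)
        rw [inv_eq_one_div, div_le_div_iff₀ hp hT']
        linarith
      linarith
  refine (Finset.sum_le_sum fun i _ => hterm i).trans ?_
  rw [Finset.sum_add_distrib, ← Finset.sum_mul]
  have hA : ∑ i : Fin N, (if (i : ℕ) < d then L else 0) ≤ d * L := by
    rw [Fin.sum_univ_eq_sum_range (fun i => if i < d then L else 0) N, ← Finset.sum_filter]
    rw [Finset.sum_const, nsmul_eq_mul]
    refine mul_le_mul_of_nonneg_right ?_ hLpos.le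
    have : (Finset.filter (fun i => i < d) (Finset.range N)) ⊆ Finset.range d := by
      intro j hj
      simp at hj ⊢
      exact hj.2
    have := Finset.card_le_card this
    rw [Finset.card_range] at this
    exact_mod_cast this
  have hB : (∑ i, a i) * (d * L / T) ≤ d * L := by
    calc _ ≤ T * (d * L / T) := mul_le_mul_of_nonneg_right hasum (by positivity)
      _ = d * L := by field_simp
  linarith

/-- **Summation step of the SpectralUCB regret analysis.**
Let `Λ` be diagonal with entries `0 < λ = λ_1 ≤ … ≤ λ_N` (1-indexed by `ev`),
let `x_1, …, x_T` have norm at most `1`, `V_0 = Λ`, `V_t = V_{t-1} + x_t x_tᵀ`,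
and `c > 0`.  If `0 ≤ ρ_t ≤ min(2, 2c ‖x_t‖_{V_{t-1}⁻¹})` for all `t`, then
`∑ ρ_t ≤ (2c+2) √(2 T log (det V_T / det Λ))`; in particular, with `d` the
effective dimension, `∑ ρ_t ≤ (2c+2) · 2 √(d T log(1 + T/λ))`. -/
theorem spectralUCB_summation_step
    (N T : ℕ) (hN : 1 ≤ N)
    (ev : ℕ → ℝ)
    (hev_pos : 0 < ev 1)
    (hev_mono : MonotoneOn ev (Set.Icc 1 N))
    (Λ : Matrix (Fin N) (Fin N) ℝ)
    (hΛ : Λ = Matrix.diagonal fun i : Fin N => ev ((i : ℕ) + 1))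
    (x : Fin T → Fin N → ℝ)
    (hx : ∀ t, ∑ i, (x t i) ^ 2 ≤ 1)
    (c : ℝ) (hc : 0 < c)
    (ρ : Fin T → ℝ)
    (hρ0 : ∀ t, 0 ≤ ρ t)
    (hρ : ∀ t, ρ t ≤ min 2
      (2 * c * Real.sqrt (x t ⬝ᵥ (designMatrix N T Λ x (t : ℕ))⁻¹ *ᵥ x t)))
    (d : ℕ)
    (hd : IsGreatest (effDimSet N ev (T : ℝ)) d) :
    (∑ t, ρ t
        ≤ (2 * c + 2) * Real.sqrt
            (2 * T * Real.log ((designMatrix N T Λ x T).det / Λ.det)))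
      ∧ ∑ t, ρ t
          ≤ (2 * c + 2) * 2
              * Real.sqrt (d * T * Real.log (1 + (T : ℝ) / ev 1)) := by
  have hΛp : Λ.PosDef := by
    rw [hΛ]
    refine Matrix.posDef_diagonal_iff.mpr fun i => hev_pos.trans_le ?_
    exact hev_mono ⟨le_rfl, hN⟩ ⟨by omega, by have := i.2; omega⟩ (by omega)
  have key : ∑ t, ρ t
        ≤ (2 * c + 2) * Real.sqrt
            (2 * T * Real.log ((designMatrix N T Λ x T).det / Λ.det)) := by
    set q : Fin T → ℝ := fun t => x t ⬝ᵥ (designMatrix N T Λ x (t : ℕ))⁻¹ *ᵥ x t with hq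
    have hq0 : ∀ t, 0 ≤ q t := fun t => by
      simpa using (aux_dm_posDef N T Λ hΛp x t).inv.posSemidef.dotProduct_mulVec_nonneg (x t)
    have hsq : ∀ t, (min 1 (Real.sqrt (q t))) ^ 2 = min 1 (q t) := by
      intro t
      rcases le_total 1 (q t) with h | h
      · rw [min_eq_left h, min_eq_left (Real.one_le_sqrt.mpr h), one_pow]
      · rw [min_eq_right h, min_eq_right (Real.sqrt_le_one.mpr h), Real.sq_sqrt (hq0 t)]
    have h1 : ∀ t, ρ t ≤ (2 * c + 2) * min 1 (Real.sqrt (q t)) := by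
      intro t
      have h := hρ t
      have ha := h.trans (min_le_left _ _)
      have hb : ρ t ≤ 2 * c * Real.sqrt (q t) := h.trans (min_le_right _ _)
      have := Real.sqrt_nonneg (q t)
      rcases le_total 1 (Real.sqrt (q t)) with h | h
      · rw [min_eq_left h]; linarith
      · rw [min_eq_right h]; linarith
    have h2 : ∑ t, min 1 (Real.sqrt (q t)) ≤ Real.sqrt
            (2 * T * Real.log ((designMatrix N T Λ x T).det / Λ.det)) := by
      refine Real.le_sqrt_of_sq_le ?_
      refine sq_sum_le_card_mul_sum_sq.trans ?_
      rw [← aux_log_sum N T Λ hΛp x, Finset.card_univ, Fintype.card_fin, mul_comm 2 (T : ℝ),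
        mul_assoc, Finset.mul_sum _ _ (2 : ℝ)]
      refine mul_le_mul_of_nonneg_left (Finset.sum_le_sum fun t _ => ?_) (Nat.cast_nonneg (α := ℝ) T)
      rw [hsq]
      exact aux_min_log _ (hq0 t)
    calc _ ≤ ∑ t, (2 * c + 2) * min 1 (Real.sqrt (q t)) := Finset.sum_le_sum fun t _ => h1 t
      _ = (2 * c + 2) * ∑ t, min 1 (Real.sqrt (q t)) := by rw [Finset.mul_sum]
      _ ≤ _ := mul_le_mul_of_nonneg_left h2 (by linarith)
  refine ⟨key, ?_⟩
  rcases Nat.eq_zero_or_pos T with rfl | hT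
  · simp
  · have hl := aux_logdet N T hT ev hev_pos hev_mono Λ hΛ hΛp x hx d hd
    refine key.trans ?_
    rw [mul_assoc (2 * c + 2) 2]
    refine mul_le_mul_of_nonneg_left ?_ (by linarith)
    have h4 : (2 : ℝ) * Real.sqrt (d * T * Real.log (1 + (T : ℝ) / ev 1))
        = Real.sqrt (2 ^ 2 * (d * T * Real.log (1 + (T : ℝ) / ev 1))) := by
      rw [Real.sqrt_mul (x := (2 : ℝ) ^ 2) (by norm_num), Real.sqrt_sq (x := 2) (by norm_num)]
    rw [h4]
    refine Real.sqrt_le_sqrt ?_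
    have := mul_le_mul_of_nonneg_left hl (show (0 : ℝ) ≤ 2 * T by positivity)
    linarith
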